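/- Let E and F be real inner product spaces, Q ⊆ E a convex set, u : E → ℝ convex on Q, W : E → F a continuous linear map, and ε > 0, R > 0. Suppose x* ∈ Q satisfies W x* = 0 and there exists y* ∈ F with ‖y*‖ ≤ R such that u(x*) ≤ u(x) + ⟨y*, W x⟩ for all x ∈ Q (Lagrangian saddle-point/dual-boundedness condition). Define U(x) = u(x) + (R²/ε)·‖W x‖². If x̃ ∈ Q satisfies U(x̃) ≤ U(x*) + ε (in particular, if U(x̃) − inf_{x∈Q} U(x) ≤ ε), then u(x̃) − u(x*) ≤ ε and ‖W x̃‖ ≤ 2ε/R. Moreover u(x*) = min of u over {x ∈ Q : W x = 0}, so u(x̃) − min_{x∈Q, Wx=0} u(x) ≤ ε. -/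

import Mathlib

open RealInnerProductSpace

/-!
A multiplier of norm at most `R` makes `xs` a minimizer of the exact penalization `u + R ‖W ·‖`.
Hence `u` can drop below `u xs` by at most `t = R ‖W xt‖` at `xt`, while near-optimality for the
quadratic penalization charges `t² / ε` for the violation. So `t² / ε ≤ ε + t`, which forces
`t ≤ 2 ε`.
-/

theorem le_two_mul_of_sq_div_le_add {t ε : ℝ} (hε : 0 < ε) (h : t ^ 2 / ε ≤ ε + t) :
    t ≤ 2 * ε := by
  have hsq : t ^ 2 ≤ (ε + t) * ε := (div_le_iff₀ hε).mp h
  by_contra! ht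
  nlinarith

section Penalty

variable {X : Type*} {Q : Set X} {u g : X → ℝ} {R ε ρ : ℝ} {xs xt : X}

theorem isMinOn_add_mul_norm_of_isMinOn_lagrangian {F : Type*} [SeminormedAddCommGroup F]
    [NormedSpace ℝ F] {W : X → F} {y : StrongDual ℝ F} (hy : ‖y‖ ≤ R) (hWxs : W xs = 0)
    (hlagrangian : IsMinOn (fun x ↦ u x + y (W x)) Q xs) :
    IsMinOn (fun x ↦ u x + R * ‖W x‖) Q xs := by
  refine isMinOn_iff.mpr fun x hx ↦ ?_
  calc u xs + R * ‖W xs‖ = u xs + y (W xs) := by simp only [hWxs, norm_zero, mul_zero, map_zero]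
    _ ≤ u x + y (W x) := isMinOn_iff.mp hlagrangian x hx
    _ ≤ u x + R * ‖W x‖ := by
      gcongr
      exact (le_abs_self _).trans (y.le_of_opNorm_le hy (W x))

theorem isMinOn_setOf_eq_zero_of_isMinOn_add_mul (hg : g xs = 0)
    (hexact : IsMinOn (fun x ↦ u x + R * g x) Q xs) : IsMinOn u {x ∈ Q | g x = 0} xs := by
  refine isMinOn_iff.mpr fun x ⟨hx, hgx⟩ ↦ ?_
  simpa only [hg, hgx, mul_zero, add_zero] using isMinOn_iff.mp hexact x hx

theorem sub_le_of_add_mul_sq_le (hρ : 0 ≤ ρ) (hg : g xs = 0)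
    (happrox : u xt + ρ * g xt ^ 2 ≤ u xs + ρ * g xs ^ 2 + ε) : u xt - u xs ≤ ε := by
  have hpenalty : 0 ≤ ρ * g xt ^ 2 := by positivity
  rw [hg] at happrox
  linarith

theorem le_two_mul_div_of_isMinOn_add_mul (hε : 0 < ε) (hR : 0 < R) (hg : g xs = 0)
    (hexact : IsMinOn (fun x ↦ u x + R * g x) Q xs) (hxt : xt ∈ Q)
    (happrox : u xt + R ^ 2 / ε * g xt ^ 2 ≤ u xs + R ^ 2 / ε * g xs ^ 2 + ε) :
    g xt ≤ 2 * ε / R := by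
  have hdrop : u xs ≤ u xt + R * g xt := by
    simpa only [hg, mul_zero, add_zero] using isMinOn_iff.mp hexact xt hxt
  have hquadratic : (R * g xt) ^ 2 / ε ≤ ε + R * g xt := by
    calc (R * g xt) ^ 2 / ε = R ^ 2 / ε * g xt ^ 2 := by ring
      _ ≤ u xs - u xt + ε := by rw [hg] at happrox; linarith
      _ ≤ ε + R * g xt := by linarith
  exact (le_div_iff₀' hR).mpr (le_two_mul_of_sq_div_le_add hε hquadratic)

theorem penalty_lemma_statement_one_general (hε : 0 < ε) (hR : 0 < R) (hg : g xs = 0)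
    (hexact : IsMinOn (fun x ↦ u x + R * g x) Q xs)
    {U : X → ℝ} (hU : ∀ x, U x = u x + R ^ 2 / ε * g x ^ 2)
    (hxt : xt ∈ Q) (happrox : U xt ≤ U xs + ε) :
    u xt - u xs ≤ ε ∧ g xt ≤ 2 * ε / R ∧ IsMinOn u {x ∈ Q | g x = 0} xs := by
  rw [hU, hU] at happrox
  exact ⟨sub_le_of_add_mul_sq_le (by positivity) hg happrox,
    le_two_mul_div_of_isMinOn_add_mul hε hR hg hexact hxt happrox,
    isMinOn_setOf_eq_zero_of_isMinOn_add_mul hg hexact⟩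

end Penalty

theorem penalty_lemma_statement_one
    {E F : Type*} [NormedAddCommGroup E] [InnerProductSpace ℝ E]
    [NormedAddCommGroup F] [InnerProductSpace ℝ F]
    (Q : Set E) (hQ : Convex ℝ Q)
    (u : E → ℝ) (hu : ConvexOn ℝ Q u)
    (W : E →L[ℝ] F)
    (ε R : ℝ) (hε : 0 < ε) (hR : 0 < R)
    (xs : E) (hxs : xs ∈ Q) (hWxs : W xs = 0)
    (ys : F) (hys : ‖ys‖ ≤ R)
    (hsaddle : ∀ x ∈ Q, u xs ≤ u x + ⟪ys, W x⟫)
    (U : E → ℝ) (hU : ∀ x, U x = u x + R ^ 2 / ε * ‖W x‖ ^ 2)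
    (xt : E) (hxt : xt ∈ Q) (happrox : U xt ≤ U xs + ε) :
    u xt - u xs ≤ ε ∧ ‖W xt‖ ≤ 2 * ε / R ∧ ∀ x ∈ Q, W x = 0 → u xs ≤ u x := by
  have hlagrangian : IsMinOn (fun x ↦ u x + innerSL ℝ ys (W x)) Q xs :=
    isMinOn_iff.mpr fun x hx ↦ by simpa [hWxs] using hsaddle x hx
  have hexact : IsMinOn (fun x ↦ u x + R * ‖W x‖) Q xs :=
    isMinOn_add_mul_norm_of_isMinOn_lagrangian ((innerSL_apply_norm ℝ ys).trans_le hys) hWxs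
      hlagrangian
  obtain ⟨hgap, hviolation, hmin⟩ := penalty_lemma_statement_one_general
    (g := fun x ↦ ‖W x‖) hε hR (norm_eq_zero.mpr hWxs) hexact hU hxt happrox
  exact ⟨hgap, hviolation, fun x hx hWx ↦ hmin ⟨hx, norm_eq_zero.mpr hWx⟩⟩
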